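/- Let l ≥ 3 be an integer and let f, g be cusp forms of weight 4 for Γ₁(l). Then, for any choice of the lifting function γ(·,·), one has 0 = Σ_{(c,d) ∈ (ℤ/lℤ)², gcd(c,d,l)=1} [ ( ⟨g,(y−x)²(−d,c+d)⟩ − ⟨g,(y+x)²(d,d−c)⟩ )·⟨f,x²(c,d)⟩ − 2·( ⟨g,y(y−x)(−d,c+d)⟩ + ⟨g,y(y+x)(d,d−c)⟩ )·⟨f,xy(c,d)⟩ + ( ⟨g,y²(−d,c+d)⟩ − ⟨g,y²(d,d−c)⟩ )·⟨f,y²(c,d)⟩ ]. -/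

import Mathlib

open scoped BigOperators MatrixGroups
open UpperHalfPlane

namespace MW

/-- `gcd(u,v,l) = 1` for `u v : ZMod l`. -/
def copr (l : ℕ) (u v : ZMod l) : Prop :=
  Nat.gcd (Nat.gcd (ZMod.val u) (ZMod.val v)) l = 1

instance (l : ℕ) (u v : ZMod l) : Decidable (copr l u v) := by
  unfold copr; infer_instance

/-- The point `i·t` of the upper half-plane (junk value for `t ≤ 0`). -/
noncomputable def axisPt (t : ℝ) : ℍ :=
  ⟨Complex.I * Complex.ofReal (if 0 < t then t else 1), by
    split_ifs with h
    · simpa using h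
    · simp⟩

/-- The period integral `P_i(f,γ) = ∫_0^{i∞} f(γ·s)·(cs+d)^{−4}·s^i ds`,
parametrized by `s = i·t`, `t ∈ (0,∞)`. -/
noncomputable def pInt (f : ℍ → ℂ) (γ : SL(2, ℤ)) (i : ℕ) : ℂ :=
  ∫ t in Set.Ioi (0 : ℝ),
    f (γ • axisPt t) *
        (((γ : Matrix (Fin 2) (Fin 2) ℤ) 1 0 : ℂ) * (Complex.I * (t : ℂ)) +
          ((γ : Matrix (Fin 2) (Fin 2) ℤ) 1 1 : ℂ)) ^ (-4 : ℤ) *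
        (Complex.I * (t : ℂ)) ^ i * Complex.I

/-- The period pairing `⟨f, (p₂x² + p₁xy + p₀y²)(u,v)⟩` for a chosen lift `γ` of `(u,v)`. -/
noncomputable def pair (f : ℍ → ℂ) (γ : SL(2, ℤ)) (p2 p1 p0 : ℂ) : ℂ :=
  p2 * pInt f γ 2 + p1 * pInt f γ 1 + p0 * pInt f γ 0

/-- The `(c,d)` term of the Petersson formula. -/
noncomputable def petTerm (l : ℕ) (f g : ℍ → ℂ) (γfun : ZMod l × ZMod l → SL(2, ℤ))
    (conjugate : Bool) (p : ZMod l × ZMod l) : ℂ :=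
  let c := p.1
  let d := p.2
  let cj : ℂ → ℂ := fun z => if conjugate then (starRingEnd ℂ) z else z
  cj (pair g (γfun (-d, c + d)) 1 (-2) 1 - pair g (γfun (d, d - c)) 1 2 1) *
      pInt f (γfun (c, d)) 2 -
    2 * cj (pair g (γfun (-d, c + d)) 0 (-1) 1 + pair g (γfun (d, d - c)) 0 1 1) *
      pInt f (γfun (c, d)) 1 +
    cj (pair g (γfun (-d, c + d)) 0 0 1 - pair g (γfun (d, d - c)) 0 0 1) *
      pInt f (γfun (c, d)) 0

end MW

/-!
Let `f` and `g` have weight `w + 2`, let `E_g(z) = -∫_z^{i∞} g(u) (z - u)^w du` be the Eichler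
integral of `g`, and let `δ = (1 -ε; ε 0)` with `ε = ±1`, an element of order three in `PSL₂(ℤ)`
permuting the cusps `0, i∞, ε` cyclically. By Cauchy's theorem the integral of the holomorphic form
`f E_g dz` over the boundary of the ideal triangle `0, i∞, ε` vanishes. Carrying its three sides to
the imaginary axis by powers of `δ` replaces `f` and `g` by slash translates, while `E_g`
transforms with the period polynomial of `g` as defect. The result is a relation between integrals
over the imaginary axis of the following kinds: `f E_g` and `f` times the period polynomial of `g`,
for the same translate of `f` and `g`, and a combination of products of periods of `f|γ` and
`g|γδ⁻¹`. Summed over all cosets `γ` of `Γ₁(l)` in `SL₂(ℤ)`, the terms of the first two kinds do not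
depend on `ε`, so the difference of the relations for `ε = 1` and `ε = -1` contains only products of
periods.
-/

namespace PeriodPairing

open Filter Topology MeasureTheory Set Polynomial

section Rotation

/-- The Möbius transformation `z ↦ ε - 1/z`. For `ε = ±1` it has order three and permutes the cusps
cyclically, `0 ↦ i∞ ↦ ε ↦ 0`. -/
noncomputable def rot (ε : ℝ) (z : ℂ) : ℂ := ε - z⁻¹

/-- The weight `k` action of `rot ε` on functions. The automorphy factor is `ε * z` rather than `z`
because `rot ε` is the action of the matrix `(1 -ε; ε 0)`; this matters in odd weight. -/
noncomputable def slashRot (ε : ℝ) (k : ℕ) (h : ℂ → ℂ) (z : ℂ) : ℂ := h (rot ε z) / (ε * z) ^ k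

variable {ε : ℝ} {z : ℂ}

theorem ne_zero_of_mem_upperHalfPlaneSet (hz : z ∈ upperHalfPlaneSet) : z ≠ 0 := by
  rintro rfl
  simp at hz

theorem I_mul_ofReal_mem_upperHalfPlaneSet {t : ℝ} (ht : 0 < t) :
    Complex.I * t ∈ upperHalfPlaneSet := by
  simpa using ht

theorem rot_mem_upperHalfPlaneSet (ε : ℝ) (hz : z ∈ upperHalfPlaneSet) :
    rot ε z ∈ upperHalfPlaneSet := by
  have hz0 : 0 < Complex.normSq z := Complex.normSq_pos.2 (ne_zero_of_mem_upperHalfPlaneSet hz)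
  have him : (rot ε z).im = z.im / Complex.normSq z := by simp [rot, Complex.inv_im, neg_div]
  exact (div_pos hz hz0).trans_eq him.symm

theorem rot_I_mul (ε t : ℝ) : rot ε (Complex.I * t) = ε + Complex.I * (t⁻¹ : ℝ) := by
  rw [rot, mul_inv, Complex.inv_I, Complex.ofReal_inv]
  ring

theorem hasDerivAt_rot (ε : ℝ) (hz : z ≠ 0) : HasDerivAt (rot ε) (z ^ 2)⁻¹ z :=
  ((hasDerivAt_inv hz).const_sub (ε : ℂ)).congr_deriv (neg_neg _)

theorem rot_mul_self (ε : ℝ) (hz : z ≠ 0) : rot ε z * z = ε * z - 1 := by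
  rw [rot, sub_mul, inv_mul_cancel₀ hz]

theorem rot_rot_mul_rot_mul_self (hε : ε ^ 2 = 1) (hz : z ∈ upperHalfPlaneSet) :
    rot ε (rot ε z) * rot ε z * z = -ε := by
  have hε' : (ε : ℂ) ^ 2 = 1 := mod_cast hε
  have h₁ := rot_mul_self ε (ne_zero_of_mem_upperHalfPlaneSet (rot_mem_upperHalfPlaneSet ε hz))
  linear_combination z * h₁ + ε * rot_mul_self ε (ne_zero_of_mem_upperHalfPlaneSet hz) + z * hε'

theorem rot_rot_rot (hε : ε ^ 2 = 1) (hz : z ∈ upperHalfPlaneSet) :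
    rot ε (rot ε (rot ε z)) = z := by
  have hz₁ := rot_mem_upperHalfPlaneSet ε hz
  have hz₂ := ne_zero_of_mem_upperHalfPlaneSet (rot_mem_upperHalfPlaneSet ε hz₁)
  have hε' : (ε : ℂ) ^ 2 = 1 := mod_cast hε
  refine mul_right_cancel₀ (mul_ne_zero hz₂ (ne_zero_of_mem_upperHalfPlaneSet hz₁)) ?_
  linear_combination rot ε z * rot_mul_self ε hz₂ +
    ε * rot_mul_self ε (ne_zero_of_mem_upperHalfPlaneSet hz₁) -
    rot_rot_mul_rot_mul_self hε hz + rot ε z * hε'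

theorem slashRot_slashRot_slashRot (hε : ε ^ 2 = 1) (k : ℕ) (H : ℂ → ℂ)
    (hz : z ∈ upperHalfPlaneSet) :
    slashRot ε k (slashRot ε k (slashRot ε k H)) z = H z / (-1) ^ k := by
  have hε' : (ε : ℂ) ^ 2 = 1 := mod_cast hε
  have hprod : ε * rot ε (rot ε z) * (ε * rot ε z * (ε * z)) = -1 := by
    linear_combination ε ^ 3 * rot_rot_mul_rot_mul_self hε hz - (ε ^ 2 + 1) * hε'
  simp only [slashRot]
  rw [rot_rot_rot hε hz, div_div, div_div, ← mul_pow, ← mul_pow, hprod]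

theorem slashRot_two_mul (hε : ε ^ 2 = 1) (w : ℕ) (f G : ℂ → ℂ) (hz : z ∈ upperHalfPlaneSet) :
    slashRot ε 2 (fun u => f u * G u) z =
      slashRot ε (w + 2) f z * (G (rot ε z) * (ε * z) ^ w) := by
  have hεz : (ε * z : ℂ) ≠ 0 :=
    mul_ne_zero (by rintro h; simp_all) (ne_zero_of_mem_upperHalfPlaneSet hz)
  simp only [slashRot, pow_add]
  field_simp

theorem eqOn_slashRot_two_mul_sub_pow (hε : ε ^ 2 = 1) {w : ℕ} {h₀ h₁ : ℂ → ℂ}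
    (h : EqOn h₁ (slashRot ε (w + 2) h₀) upperHalfPlaneSet) (hz : z ∈ upperHalfPlaneSet) :
    EqOn (fun u => h₁ u * (z - u) ^ w)
      (slashRot ε 2 fun u => h₀ u * ((rot ε z - u) ^ w * (ε * z) ^ w)) upperHalfPlaneSet := by
  intro u hu
  have hz0 := ne_zero_of_mem_upperHalfPlaneSet hz
  have hu0 := ne_zero_of_mem_upperHalfPlaneSet hu
  have hε' : (ε : ℂ) ^ 2 = 1 := mod_cast hε
  have hbase : (rot ε z - rot ε u) * (ε * z) * (ε * u) = z - u := by
    linear_combination u * ε ^ 2 * rot_mul_self ε hz0 - z * ε ^ 2 * rot_mul_self ε hu0 +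
      (z - u) * hε'
  rw [slashRot_two_mul hε w _ _ hu, ← h hu, ← mul_pow, ← mul_pow, hbase]

end Rotation

section CuspStrip

/-- The filter of neighbourhoods of `i∞` in the strip `|Re z| ≤ 1`, which contains the geodesics
joining `i∞` to `-1`, `0` and `1`. -/
def cuspStrip : Filter ℂ := comap Complex.im atTop ⊓ 𝓟 {z | |z.re| ≤ 1}

theorem tendsto_im_cuspStrip : Tendsto Complex.im cuspStrip atTop :=
  tendsto_comap.mono_left inf_le_left

theorem eventually_mem_upperHalfPlaneSet_cuspStrip : ∀ᶠ z in cuspStrip, z ∈ upperHalfPlaneSet :=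
  tendsto_im_cuspStrip.eventually (eventually_gt_atTop 0)

theorem eventually_abs_re_le_one_cuspStrip : ∀ᶠ z in cuspStrip, |z.re| ≤ 1 :=
  mem_inf_of_right (mem_principal_self _)

theorem tendsto_add_I_mul_cuspStrip {ε : ℝ} (hε : |ε| ≤ 1) :
    Tendsto (fun t : ℝ => ε + Complex.I * t) atTop cuspStrip := by
  refine tendsto_inf.2 ⟨tendsto_comap_iff.2 (tendsto_id.congr fun t => ?_),
    tendsto_principal.2 (Eventually.of_forall fun t => ?_)⟩
  · simp
  · simpa using hε

theorem tendsto_I_mul_cuspStrip : Tendsto (fun t : ℝ => Complex.I * t) atTop cuspStrip := by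
  simpa using tendsto_add_I_mul_cuspStrip (ε := 0) (by simp)

instance : cuspStrip.NeBot := tendsto_I_mul_cuspStrip.neBot

theorem tendsto_rot_I_mul_cuspStrip {ε : ℝ} (hε : |ε| ≤ 1) :
    Tendsto (fun t : ℝ => rot ε (Complex.I * t)) (𝓝[>] 0) cuspStrip := by
  simp only [rot_I_mul]
  exact (tendsto_add_I_mul_cuspStrip hε).comp tendsto_inv_nhdsGT_zero

end CuspStrip

section AxisIntegral

/-- The line integral of `F` along the imaginary axis from `0` to `i∞`. -/
noncomputable def axisIntegral (F : ℂ → ℂ) : ℂ :=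
  ∫ t in Ioi (0 : ℝ), F (Complex.I * t) * Complex.I

/-- The line integral defining `axisIntegral F` converges absolutely. -/
def AxisIntegrable (F : ℂ → ℂ) : Prop :=
  IntegrableOn (fun t : ℝ => F (Complex.I * t) * Complex.I) (Ioi 0)

theorem axisIntegral_congr {F G : ℂ → ℂ} (h : EqOn F G upperHalfPlaneSet) :
    axisIntegral F = axisIntegral G :=
  setIntegral_congr_fun measurableSet_Ioi fun _ ht =>
    congrArg (· * Complex.I) (h (I_mul_ofReal_mem_upperHalfPlaneSet ht))

theorem axisIntegral_mul_const (F : ℂ → ℂ) (c : ℂ) :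
    axisIntegral (fun z => F z * c) = axisIntegral F * c := by
  simp only [axisIntegral, mul_right_comm _ c, integral_mul_const]

theorem axisIntegral_add {F G : ℂ → ℂ} (hF : AxisIntegrable F) (hG : AxisIntegrable G) :
    axisIntegral (fun z => F z + G z) = axisIntegral F + axisIntegral G := by
  simp only [axisIntegral, add_mul]
  exact integral_add hF hG

theorem axisIntegral_sum {ι : Type*} {s : Finset ι} {F : ι → ℂ → ℂ}
    (hF : ∀ i ∈ s, AxisIntegrable (F i)) :
    axisIntegral (fun z => ∑ i ∈ s, F i z) = ∑ i ∈ s, axisIntegral (F i) := by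
  simp only [axisIntegral, Finset.sum_mul]
  exact integral_finsetSum s hF

theorem tendsto_integral_Ioi_nhdsGT {E : Type*} [NormedAddCommGroup E] [NormedSpace ℝ E]
    {φ : ℝ → E} {a : ℝ} (hφ : IntegrableOn φ (Ioi a)) :
    Tendsto (fun s => ∫ t in Ioi s, φ t) (𝓝[>] a) (𝓝 (∫ t in Ioi a, φ t)) := by
  have hcov : AECover (volume.restrict (Ioi a)) (𝓝[>] a) fun s => Ioi s :=
    aecover_Ioi_of_Ioi (tendsto_id.mono_left nhdsWithin_le_nhds)
  refine (hcov.integral_tendsto_of_countably_generated hφ).congr' ?_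
  filter_upwards [self_mem_nhdsWithin] with s hs
  rw [Measure.restrict_restrict measurableSet_Ioi,
    inter_eq_self_of_subset_left (Ioi_subset_Ioi (le_of_lt hs))]

end AxisIntegral

section IsCuspidal

/-- A holomorphic function on the upper half-plane which decays faster than every power of `z` at
`i∞` and vanishes at the cusp `0`, the latter along the imaginary axis only. Slash translates of
cusp forms, and their products with polynomials and Eichler integrals, are of this kind. -/
structure IsCuspidal (h : ℂ → ℂ) : Prop where
  differentiableOn : DifferentiableOn ℂ h upperHalfPlaneSet
  tendsto_mul_pow (n : ℕ) : Tendsto (fun z => h z * z ^ n) cuspStrip (𝓝 0)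
  tendsto_axis_zero : Tendsto (fun t : ℝ => h (Complex.I * t)) (𝓝[>] 0) (𝓝 0)

namespace IsCuspidal

variable {h h' : ℂ → ℂ}

theorem tendsto (hh : IsCuspidal h) : Tendsto h cuspStrip (𝓝 0) := by
  simpa using hh.tendsto_mul_pow 0

theorem congr (hh : IsCuspidal h) (heq : EqOn h' h upperHalfPlaneSet) : IsCuspidal h' where
  differentiableOn := hh.differentiableOn.congr heq
  tendsto_mul_pow n := (hh.tendsto_mul_pow n).congr' <| by
    filter_upwards [eventually_mem_upperHalfPlaneSet_cuspStrip] with z hz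
    rw [heq hz]
  tendsto_axis_zero := hh.tendsto_axis_zero.congr' <| by
    filter_upwards [self_mem_nhdsWithin] with t ht
    rw [heq (I_mul_ofReal_mem_upperHalfPlaneSet ht)]

theorem zero : IsCuspidal fun _ => 0 where
  differentiableOn := differentiableOn_const 0
  tendsto_mul_pow n := by simpa only [zero_mul] using tendsto_const_nhds
  tendsto_axis_zero := tendsto_const_nhds

theorem add (hh : IsCuspidal h) (hh' : IsCuspidal h') : IsCuspidal fun z => h z + h' z where
  differentiableOn := hh.differentiableOn.add hh'.differentiableOn
  tendsto_mul_pow n := by simpa [add_mul] using (hh.tendsto_mul_pow n).add (hh'.tendsto_mul_pow n)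
  tendsto_axis_zero := by simpa using hh.tendsto_axis_zero.add hh'.tendsto_axis_zero

theorem sum {ι : Type*} {s : Finset ι} {F : ι → ℂ → ℂ} (hF : ∀ i ∈ s, IsCuspidal (F i)) :
    IsCuspidal fun z => ∑ i ∈ s, F i z := by
  classical
  induction s using Finset.induction_on with
  | empty => simpa using zero
  | insert i s hi ih =>
    simp only [Finset.sum_insert hi]
    exact (hF i (Finset.mem_insert_self i s)).add
      (ih fun j hj => hF j (Finset.mem_insert_of_mem hj))

theorem mul_of_tendsto (hh : IsCuspidal h) {Φ : ℂ → ℂ} {a b : ℂ}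
    (hΦ : DifferentiableOn ℂ Φ upperHalfPlaneSet) (ha : Tendsto Φ cuspStrip (𝓝 a))
    (hb : Tendsto (fun t : ℝ => Φ (Complex.I * t)) (𝓝[>] 0) (𝓝 b)) :
    IsCuspidal fun z => h z * Φ z where
  differentiableOn := hh.differentiableOn.mul hΦ
  tendsto_mul_pow n := by simpa [mul_right_comm] using (hh.tendsto_mul_pow n).mul ha
  tendsto_axis_zero := by simpa using hh.tendsto_axis_zero.mul hb

theorem mul_const (hh : IsCuspidal h) (c : ℂ) : IsCuspidal fun z => h z * c :=
  hh.mul_of_tendsto (differentiableOn_const c) tendsto_const_nhds tendsto_const_nhds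

theorem mul_pow (hh : IsCuspidal h) (m : ℕ) : IsCuspidal fun z => h z * z ^ m where
  differentiableOn := hh.differentiableOn.mul (differentiable_id.pow m).differentiableOn
  tendsto_mul_pow n := by simpa only [mul_assoc, ← pow_add] using hh.tendsto_mul_pow (m + n)
  tendsto_axis_zero := by
    have hpow : Tendsto (fun t : ℝ => (Complex.I * (t : ℂ)) ^ m) (𝓝[>] 0)
        (𝓝 ((Complex.I * (0 : ℝ)) ^ m)) :=
      (Continuous.tendsto (by fun_prop) 0).mono_left nhdsWithin_le_nhds
    simpa using hh.tendsto_axis_zero.mul hpow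

theorem mul_eval (hh : IsCuspidal h) (P : ℂ[X]) : IsCuspidal fun z => h z * P.eval z := by
  refine (sum (s := Finset.range (P.natDegree + 1))
    fun m _ => (hh.mul_pow m).mul_const (P.coeff m)).congr fun z _ => ?_
  simp only [P.eval_eq_sum_range, Finset.mul_sum]
  exact Finset.sum_congr rfl fun m _ => by ring

theorem axisIntegrable (hh : IsCuspidal h) : AxisIntegrable h := by
  have hcont : ContinuousOn (fun t : ℝ => h (Complex.I * t) * Complex.I) (Ioi 0) :=
    (hh.differentiableOn.continuousOn.comp (by fun_prop)
      fun _ ht => I_mul_ofReal_mem_upperHalfPlaneSet ht).mul continuousOn_const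
  have hmeas := hcont.aestronglyMeasurable (μ := volume) measurableSet_Ioi
  rw [AxisIntegrable, integrableOn_Ioi_iff_integrableAtFilter_atTop_nhdsWithin]
  refine ⟨?_, ?_, hcont.locallyIntegrableOn measurableSet_Ioi⟩
  · have hint : IntegrableAtFilter (fun t : ℝ => t ^ (-2 : ℝ)) atTop :=
      ⟨Ioi 1, Ioi_mem_atTop 1, integrableOn_Ioi_rpow_of_lt (by norm_num) one_pos⟩
    refine Asymptotics.IsBigO.integrableAtFilter ?_ ⟨Ioi 0, Ioi_mem_atTop 0, hmeas⟩ hint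
    have hbdd := (((hh.tendsto_mul_pow 2).comp tendsto_I_mul_cuspStrip).mul_const
      (-Complex.I)).isBigO_one ℝ
    refine ((Asymptotics.isBigO_refl (fun t : ℝ => t ^ (-2 : ℝ)) atTop).smul hbdd).congr' ?_ ?_
    · filter_upwards [eventually_gt_atTop 0] with t ht
      have ht' : (t : ℂ) ≠ 0 := mod_cast ht.ne'
      rw [Real.rpow_neg ht.le, Real.rpow_two, Complex.real_smul]
      push_cast
      simp only [Function.comp_apply]
      field_simp
      linear_combination -h (t * Complex.I) * Complex.I_sq
    · simp
  · refine Measure.FiniteAtFilter.integrableAtFilter_of_tendsto (b := 0)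
      ⟨Ioi 0, self_mem_nhdsWithin, hmeas⟩
      ((Measure.finiteAt_nhds volume (0 : ℝ)).filter_mono nhdsWithin_le_nhds) ?_
    simpa using hh.tendsto_axis_zero.mul_const Complex.I

end IsCuspidal

end IsCuspidal

section Primitive

/-- `Φ` is the primitive of `H` on the upper half-plane based at the cusp `i∞`. -/
structure IsPrimitive (H Φ : ℂ → ℂ) : Prop where
  hasDerivAt : ∀ z ∈ upperHalfPlaneSet, HasDerivAt Φ (H z) z
  tendsto_cuspStrip : Tendsto Φ cuspStrip (𝓝 0)

/-- The primitive of `H` based at `i∞`, that is `z ↦ -∫_z^{i∞} H(u) du`. It is a junk value when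
`H` has no such primitive, and outside the upper half-plane. -/
noncomputable def primitive (H : ℂ → ℂ) : ℂ → ℂ := Classical.epsilon (IsPrimitive H)

variable {Φ H : ℂ → ℂ}

theorem exists_hasDerivAt_of_differentiableOn (hH : DifferentiableOn ℂ H upperHalfPlaneSet) :
    ∃ Φ : ℂ → ℂ, ∀ z ∈ upperHalfPlaneSet, HasDerivAt Φ (H z) z := by
  obtain ⟨Φ, hΦ⟩ := (convex_halfSpace_im_gt 0).exists_forall_hasDerivWithinAt hH
  exact ⟨Φ, fun z hz => (hΦ z hz).hasDerivAt (isOpen_upperHalfPlaneSet.mem_nhds hz)⟩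

theorem eq_of_hasDerivAt_zero (hΦ : ∀ z ∈ upperHalfPlaneSet, HasDerivAt Φ 0 z) {z w : ℂ}
    (hz : z ∈ upperHalfPlaneSet) (hw : w ∈ upperHalfPlaneSet) : Φ z = Φ w :=
  isOpen_upperHalfPlaneSet.is_const_of_deriv_eq_zero (convex_halfSpace_im_gt 0).isPreconnected
    (fun z hz => (hΦ z hz).differentiableAt.differentiableWithinAt)
    (fun z hz => (hΦ z hz).deriv) hz hw

theorem hasDerivAt_comp_I_mul (hΦ : ∀ z ∈ upperHalfPlaneSet, HasDerivAt Φ (H z) z) {t : ℝ}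
    (ht : 0 < t) :
    HasDerivAt (fun t : ℝ => Φ (Complex.I * t)) (H (Complex.I * t) * Complex.I) t :=
  ((hΦ _ (I_mul_ofReal_mem_upperHalfPlaneSet ht)).comp (t : ℂ)
    (hasDerivAt_const_mul Complex.I)).comp_ofReal

/-- By the mean value inequality, the values of `Φ` in the strip at height `y` differ by at most
the supremum of `|H|` there. -/
theorem tendsto_cuspStrip_of_tendsto_axis
    (hΦ : ∀ z ∈ upperHalfPlaneSet, HasDerivAt Φ (H z) z) (hH : Tendsto H cuspStrip (𝓝 0)) {a : ℂ}
    (ha : Tendsto (fun t : ℝ => Φ (Complex.I * t)) atTop (𝓝 a)) : Tendsto Φ cuspStrip (𝓝 a) := by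
  suffices hdiff : Tendsto (fun z => Φ z - Φ (Complex.I * z.im)) cuspStrip (𝓝 0) by
    simpa using hdiff.add (ha.comp tendsto_im_cuspStrip)
  rw [Metric.tendsto_nhds] at hH ⊢
  intro r hr
  have hHr := hH (r / 2) (half_pos hr)
  rw [cuspStrip, eventually_inf_principal, eventually_comap] at hHr
  obtain ⟨Y, hY⟩ := eventually_atTop.1 hHr
  filter_upwards [eventually_abs_re_le_one_cuspStrip, eventually_mem_upperHalfPlaneSet_cuspStrip,
    tendsto_im_cuspStrip.eventually (eventually_ge_atTop Y)] with z hre him hYz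
  set level : Set ℂ := {u | u.im = z.im} ∩ Complex.re ⁻¹' Icc (-1) 1 with hlevel
  have hconvex : Convex ℝ level :=
    (convex_hyperplane Complex.imLm.isLinear z.im).inter
      ((convex_Icc (-1) 1).linear_preimage Complex.reLm)
  have hbound := hconvex.norm_image_sub_le_of_norm_hasDerivWithin_le (f := Φ) (f' := H)
    (C := r / 2) (x := Complex.I * z.im) (y := z)
    (fun u hu => (hΦ u (by simpa [hu.1.out] using him)).hasDerivWithinAt)
    (fun u hu => by simpa using (hY z.im hYz u hu.1 (abs_le.2 hu.2)).le)
    (by simp [hlevel]) ⟨rfl, abs_le.1 hre⟩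
  have hsub : z - Complex.I * z.im = z.re := by apply Complex.ext <;> simp
  rw [hsub, Complex.norm_real, Real.norm_eq_abs] at hbound
  rw [dist_zero_right]
  nlinarith

namespace IsCuspidal

theorem exists_isPrimitive (hH : IsCuspidal H) : ∃ Φ, IsPrimitive H Φ := by
  obtain ⟨Φ, hΦ⟩ := exists_hasDerivAt_of_differentiableOn hH.differentiableOn
  obtain ⟨a, ha⟩ : ∃ a, Tendsto (fun t : ℝ => Φ (Complex.I * t)) atTop (𝓝 a) :=
    ⟨_, tendsto_limUnder_of_hasDerivAt_of_integrableOn_Ioi (fun _ => hasDerivAt_comp_I_mul hΦ)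
      hH.axisIntegrable⟩
  refine ⟨fun z => Φ z - a, fun z hz => (hΦ z hz).sub_const a, ?_⟩
  simpa using (tendsto_cuspStrip_of_tendsto_axis hΦ hH.tendsto ha).sub_const a

theorem isPrimitive_primitive (hH : IsCuspidal H) : IsPrimitive H (primitive H) :=
  Classical.epsilon_spec hH.exists_isPrimitive

theorem differentiableOn_primitive (hH : IsCuspidal H) :
    DifferentiableOn ℂ (primitive H) upperHalfPlaneSet := fun z hz =>
  (hH.isPrimitive_primitive.hasDerivAt z hz).differentiableAt.differentiableWithinAt

theorem primitive_I_mul (hH : IsCuspidal H) {s : ℝ} (hs : 0 < s) :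
    primitive H (Complex.I * s) = -∫ t in Ioi s, H (Complex.I * t) * Complex.I := by
  rw [integral_Ioi_of_hasDerivAt_of_tendsto'
    (f := fun t : ℝ => primitive H (Complex.I * t)) (m := 0)
    (fun t ht => hasDerivAt_comp_I_mul hH.isPrimitive_primitive.hasDerivAt (hs.trans_le ht))
    (hH.axisIntegrable.mono_set (Ioi_subset_Ioi hs.le))
    (hH.isPrimitive_primitive.tendsto_cuspStrip.comp tendsto_I_mul_cuspStrip), zero_sub, neg_neg]

theorem tendsto_primitive_axis_zero (hH : IsCuspidal H) :
    Tendsto (fun t : ℝ => primitive H (Complex.I * t)) (𝓝[>] 0) (𝓝 (-axisIntegral H)) := by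
  refine (tendsto_integral_Ioi_nhdsGT hH.axisIntegrable).neg.congr' ?_
  filter_upwards [self_mem_nhdsWithin] with t ht
  exact (hH.primitive_I_mul ht).symm

theorem mul_primitive {h : ℂ → ℂ} (hh : IsCuspidal h) (hH : IsCuspidal H) :
    IsCuspidal fun z => h z * primitive H z :=
  hh.mul_of_tendsto hH.differentiableOn_primitive hH.isPrimitive_primitive.tendsto_cuspStrip
    hH.tendsto_primitive_axis_zero

end IsCuspidal

theorem IsPrimitive.eqOn {Φ' : ℂ → ℂ} (hΦ : IsPrimitive H Φ) (hΦ' : IsPrimitive H Φ') :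
    EqOn Φ Φ' upperHalfPlaneSet := by
  intro z hz
  have hderiv : ∀ u ∈ upperHalfPlaneSet, HasDerivAt (fun u => Φ u - Φ' u) 0 u := fun u hu =>
    ((hΦ.hasDerivAt u hu).sub (hΦ'.hasDerivAt u hu)).congr_deriv (sub_self _)
  have hlim : Tendsto (fun u => Φ u - Φ' u) cuspStrip (𝓝 (Φ z - Φ' z)) :=
    tendsto_const_nhds.congr' <| by
      filter_upwards [eventually_mem_upperHalfPlaneSet_cuspStrip] with u hu
      exact eq_of_hasDerivAt_zero hderiv hz hu
  have hzero := hΦ.tendsto_cuspStrip.sub hΦ'.tendsto_cuspStrip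
  rw [sub_zero] at hzero
  exact sub_eq_zero.1 (tendsto_nhds_unique hlim hzero)

theorem primitive_sum_mul_const {ι : Type*} {s : Finset ι} {F : ι → ℂ → ℂ}
    (hF : ∀ i ∈ s, IsCuspidal (F i)) (c : ι → ℂ) {z : ℂ} (hz : z ∈ upperHalfPlaneSet) :
    primitive (fun u => ∑ i ∈ s, F i u * c i) z = ∑ i ∈ s, primitive (F i) z * c i := by
  have hsum : IsPrimitive (fun u => ∑ i ∈ s, F i u * c i)
      (fun u => ∑ i ∈ s, primitive (F i) u * c i) :=
    { hasDerivAt := fun u hu => HasDerivAt.fun_sum fun i hi =>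
        ((hF i hi).isPrimitive_primitive.hasDerivAt u hu).mul_const (c i)
      tendsto_cuspStrip := by
        simpa using tendsto_finsetSum s fun i hi =>
          (hF i hi).isPrimitive_primitive.tendsto_cuspStrip.mul_const (c i) }
  exact IsPrimitive.eqOn (Classical.epsilon_spec ⟨_, hsum⟩) hsum hz

theorem primitive_mul_const (hH : IsCuspidal H) (c : ℂ) {z : ℂ} (hz : z ∈ upperHalfPlaneSet) :
    primitive (fun u => H u * c) z = primitive H z * c := by
  simpa using primitive_sum_mul_const (s := {()}) (F := fun _ => H) (fun _ _ => hH) (fun _ => c) hz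

/-- The path from `i∞` to `rot ε z` is the image under `rot ε` of a path from `0` to `z`, which is
the imaginary axis followed by a path from `i∞` to `z`. -/
theorem primitive_rot {ε : ℝ} (hε : ε ^ 2 = 1) {H₀ H₁ : ℂ → ℂ} (h₀ : IsCuspidal H₀)
    (h₁ : IsCuspidal H₁) (h : EqOn H₁ (slashRot ε 2 H₀) upperHalfPlaneSet) {z : ℂ}
    (hz : z ∈ upperHalfPlaneSet) :
    primitive H₀ (rot ε z) = primitive H₁ z + axisIntegral H₁ := by
  have hε' : (ε : ℂ) ^ 2 = 1 := mod_cast hε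
  have hderiv : ∀ u ∈ upperHalfPlaneSet,
      HasDerivAt (fun u => primitive H₀ (rot ε u) - primitive H₁ u) 0 u := fun u hu => by
    refine (((h₀.isPrimitive_primitive.hasDerivAt _ (rot_mem_upperHalfPlaneSet ε hu)).comp u
      (hasDerivAt_rot ε (ne_zero_of_mem_upperHalfPlaneSet hu))).sub
        (h₁.isPrimitive_primitive.hasDerivAt u hu)).congr_deriv ?_
    rw [h hu, slashRot, mul_pow, hε', one_mul, div_eq_mul_inv, sub_self]
  have hconst : Tendsto
      (fun t : ℝ => primitive H₀ (rot ε (Complex.I * t)) - primitive H₁ (Complex.I * t)) (𝓝[>] 0)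
      (𝓝 (primitive H₀ (rot ε z) - primitive H₁ z)) :=
    tendsto_const_nhds.congr' <| by
      filter_upwards [self_mem_nhdsWithin] with t ht
      exact eq_of_hasDerivAt_zero hderiv hz (I_mul_ofReal_mem_upperHalfPlaneSet ht)
  have hlim := (h₀.isPrimitive_primitive.tendsto_cuspStrip.comp
    (tendsto_rot_I_mul_cuspStrip (sq_le_one_iff_abs_le_one ε |>.1 hε.le))).sub
      h₁.tendsto_primitive_axis_zero
  linear_combination tendsto_nhds_unique hconst hlim

/-- Cauchy's theorem for the ideal triangle with vertices `0`, `i∞` and `ε`. -/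
theorem axisIntegral_add_slashRot_add_slashRot_slashRot {ε : ℝ} (hε : ε ^ 2 = 1)
    {H₀ H₁ H₂ : ℂ → ℂ} (h₀ : IsCuspidal H₀) (h₁ : IsCuspidal H₁) (h₂ : IsCuspidal H₂)
    (h₀₁ : EqOn H₁ (slashRot ε 2 H₀) upperHalfPlaneSet)
    (h₁₂ : EqOn H₂ (slashRot ε 2 H₁) upperHalfPlaneSet) :
    axisIntegral H₀ + axisIntegral H₁ + axisIntegral H₂ = 0 := by
  have h₂₀ : EqOn H₀ (slashRot ε 2 H₂) upperHalfPlaneSet := fun z hz => by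
    have hz₁ := rot_mem_upperHalfPlaneSet ε hz
    have hcube := slashRot_slashRot_slashRot hε 2 H₀ hz
    rw [slashRot, slashRot, ← h₀₁ (rot_mem_upperHalfPlaneSet ε hz₁), ← slashRot, ← h₁₂ hz₁,
      ← slashRot, neg_one_sq, div_one] at hcube
    exact hcube.symm
  have hz : Complex.I ∈ upperHalfPlaneSet := by simp
  have hz₁ := rot_mem_upperHalfPlaneSet ε hz
  have hz₂ := rot_mem_upperHalfPlaneSet ε hz₁
  have hturn := primitive_rot hε h₀ h₁ h₀₁ hz₂
  rw [rot_rot_rot hε hz] at hturn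
  linear_combination -hturn - primitive_rot hε h₁ h₂ h₁₂ hz₁ - primitive_rot hε h₂ h₀ h₂₀ hz

end Primitive

section EichlerIntegral

/-- The Eichler integral `-∫_z^{i∞} h(u) (z - u)^w du` of a form `h` of weight `w + 2`. -/
noncomputable def eichler (w : ℕ) (h : ℂ → ℂ) (z : ℂ) : ℂ :=
  primitive (fun u => h u * (z - u) ^ w) z

/-- The period polynomial `∫_0^{i∞} h(u) (x - y u)^w du` of a form `h` of weight `w + 2`, as a
homogeneous function of degree `w` in two variables. -/
noncomputable def periodForm (w : ℕ) (h : ℂ → ℂ) (x y : ℂ) : ℂ :=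
  axisIntegral fun u => h u * (x - y * u) ^ w

/-- The pairing of `f` with the Eichler integral of `g`. -/
noncomputable def eichlerPairing (w : ℕ) (f g : ℂ → ℂ) : ℂ :=
  axisIntegral fun z => f z * eichler w g z

/-- The double period `∫∫ f(z) g(u) (z - u)^w du dz` along the imaginary axis. -/
noncomputable def doublePeriod (w : ℕ) (f g : ℂ → ℂ) : ℂ :=
  axisIntegral fun z => f z * periodForm w g z 1

/-- The double period `∫∫ f(z) g(u) (ε z)^w (rot ε z - u)^w du dz` along the imaginary axis, that
is `doublePeriod` with the kernel rotated in the variable `z`. -/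
noncomputable def rotDoublePeriod (w : ℕ) (ε : ℝ) (f g : ℂ → ℂ) : ℂ :=
  axisIntegral fun z => f z * periodForm w g (z - ε) (ε * z)

variable {w : ℕ} {f g h : ℂ → ℂ} {z : ℂ}

theorem sub_mul_pow_eq_sum (w : ℕ) (x y u : ℂ) :
    (x - y * u) ^ w =
      ∑ m ∈ Finset.range (w + 1), u ^ m * ((-y) ^ m * x ^ (w - m) * w.choose m) := by
  rw [sub_eq_neg_add, ← neg_mul, add_pow]
  exact Finset.sum_congr rfl fun m _ => by ring

theorem IsCuspidal.mul_sub_mul_pow (hh : IsCuspidal h) (x y : ℂ) :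
    IsCuspidal fun u => h u * (x - y * u) ^ w :=
  (hh.mul_eval ((C x - C y * X) ^ w)).congr fun u _ => by simp

theorem periodForm_smul (w : ℕ) (h : ℂ → ℂ) (c x y : ℂ) :
    periodForm w h (c * x) (c * y) = c ^ w * periodForm w h x y := by
  rw [mul_comm (c ^ w), periodForm, periodForm, ← axisIntegral_mul_const]
  refine axisIntegral_congr fun u _ => ?_
  rw [mul_assoc c, ← mul_sub, mul_pow]
  ring

theorem periodForm_eq_sum (hh : IsCuspidal h) (w : ℕ) (x y : ℂ) :
    periodForm w h x y = ∑ m ∈ Finset.range (w + 1),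
      axisIntegral (fun u => h u * u ^ m) * ((-y) ^ m * x ^ (w - m) * w.choose m) := by
  simp only [periodForm, sub_mul_pow_eq_sum, Finset.mul_sum, ← mul_assoc (h _)]
  rw [axisIntegral_sum fun m _ => ((hh.mul_pow m).mul_const _).axisIntegrable]
  simp only [axisIntegral_mul_const]

theorem eichler_eq_sum (hh : IsCuspidal h) (w : ℕ) (hz : z ∈ upperHalfPlaneSet) :
    eichler w h z = ∑ m ∈ Finset.range (w + 1),
      primitive (fun u => h u * u ^ m) z * ((-1) ^ m * z ^ (w - m) * w.choose m) := by
  rw [← primitive_sum_mul_const (fun m _ => hh.mul_pow m) _ hz, eichler]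
  congr 1
  ext u
  simpa [Finset.mul_sum, mul_assoc] using congrArg (h u * ·) (sub_mul_pow_eq_sum w z 1 u)

namespace IsCuspidal

theorem mul_eichler (hf : IsCuspidal f) (hg : IsCuspidal g) (w : ℕ) :
    IsCuspidal fun z => f z * eichler w g z := by
  refine (sum (s := Finset.range (w + 1)) fun m _ => (hf.mul_primitive (hg.mul_pow m)).mul_eval
    (C ((-1) ^ m) * X ^ (w - m) * (w.choose m : ℂ[X]))).congr fun z hz => ?_
  simp [eichler_eq_sum hg w hz, Finset.mul_sum, mul_assoc]

theorem mul_periodForm (hf : IsCuspidal f) (hg : IsCuspidal g) (w : ℕ) (P Q : ℂ[X]) :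
    IsCuspidal fun z => f z * periodForm w g (P.eval z) (Q.eval z) := by
  refine (hf.mul_eval (∑ m ∈ Finset.range (w + 1), C (axisIntegral fun u => g u * u ^ m) *
    ((-Q) ^ m * P ^ (w - m) * (w.choose m : ℂ[X])))).congr fun z _ => ?_
  simp [periodForm_eq_sum hg, eval_finsetSum]

theorem mul_periodForm_one (hf : IsCuspidal f) (hg : IsCuspidal g) (w : ℕ) :
    IsCuspidal fun z => f z * periodForm w g z 1 :=
  (hf.mul_periodForm hg w X 1).congr fun z _ => by simp

theorem mul_periodForm_rot (hf : IsCuspidal f) (hg : IsCuspidal g) (w : ℕ) (ε : ℝ) :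
    IsCuspidal fun z => f z * periodForm w g (z - ε) (ε * z) :=
  (hf.mul_periodForm hg w (X - C (ε : ℂ)) (C (ε : ℂ) * X)).congr fun z _ => by simp

end IsCuspidal

theorem eichler_rot_mul_pow {ε : ℝ} (hε : ε ^ 2 = 1) {g₀ g₁ : ℂ → ℂ} (hg₀ : IsCuspidal g₀)
    (hg₁ : IsCuspidal g₁) (hg : EqOn g₁ (slashRot ε (w + 2) g₀) upperHalfPlaneSet)
    (hz : z ∈ upperHalfPlaneSet) :
    eichler w g₀ (rot ε z) * (ε * z) ^ w = eichler w g₁ z + periodForm w g₁ z 1 := by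
  have h₀ : IsCuspidal fun u => g₀ u * (rot ε z - u) ^ w := by
    simpa using hg₀.mul_sub_mul_pow (rot ε z) 1
  have h₁ : IsCuspidal fun u => g₁ u * (z - u) ^ w := by simpa using hg₁.mul_sub_mul_pow z 1
  have hrot := primitive_rot hε (by simpa only [mul_assoc] using h₀.mul_const ((ε * z) ^ w)) h₁
    (eqOn_slashRot_two_mul_sub_pow hε hg hz) hz
  have hconst := primitive_mul_const h₀ ((ε * z) ^ w) (rot_mem_upperHalfPlaneSet ε hz)
  simp only [mul_assoc] at hconst
  simpa [eichler, periodForm, hconst] using hrot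

/-- Integrate `f₀(z) * eichler w g₀ z` over the boundary of the ideal triangle `0, i∞, ε`. -/
theorem eichlerPairing_add_eichlerPairing_add_eichlerPairing {ε : ℝ} (hε : ε ^ 2 = 1)
    {f₀ f₁ f₂ g₀ g₁ g₂ : ℂ → ℂ} (hf₀ : IsCuspidal f₀) (hf₁ : IsCuspidal f₁) (hf₂ : IsCuspidal f₂)
    (hg₀ : IsCuspidal g₀) (hg₁ : IsCuspidal g₁) (hg₂ : IsCuspidal g₂)
    (hf₀₁ : EqOn f₁ (slashRot ε (w + 2) f₀) upperHalfPlaneSet)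
    (hf₁₂ : EqOn f₂ (slashRot ε (w + 2) f₁) upperHalfPlaneSet)
    (hg₀₁ : EqOn g₁ (slashRot ε (w + 2) g₀) upperHalfPlaneSet)
    (hg₁₂ : EqOn g₂ (slashRot ε (w + 2) g₁) upperHalfPlaneSet) :
    eichlerPairing w f₀ g₀ + (eichlerPairing w f₁ g₁ + doublePeriod w f₁ g₁) +
      (eichlerPairing w f₂ g₂ + doublePeriod w f₂ g₂ + rotDoublePeriod w ε f₂ g₁) = 0 := by
  have hε' : (ε : ℂ) ^ 2 = 1 := mod_cast hε
  have hE₁ := hf₁.mul_eichler hg₁ w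
  have hE₂ := hf₂.mul_eichler hg₂ w
  have hP₁ := hf₁.mul_periodForm_one hg₁ w
  have hP₂ := hf₂.mul_periodForm_one hg₂ w
  have hR := hf₂.mul_periodForm_rot hg₁ w ε
  have h₀₁ : EqOn (fun z => f₁ z * eichler w g₁ z + f₁ z * periodForm w g₁ z 1)
      (slashRot ε 2 fun z => f₀ z * eichler w g₀ z) upperHalfPlaneSet := fun z hz => by
    rw [slashRot_two_mul hε w _ _ hz, ← hf₀₁ hz, eichler_rot_mul_pow hε hg₀ hg₁ hg₀₁ hz, mul_add]
  have h₁₂ : EqOn (fun z => f₂ z * eichler w g₂ z + f₂ z * periodForm w g₂ z 1 +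
        f₂ z * periodForm w g₁ (z - ε) (ε * z))
      (slashRot ε 2 fun z => f₁ z * eichler w g₁ z + f₁ z * periodForm w g₁ z 1)
      upperHalfPlaneSet := fun z hz => by
    have hperiod : periodForm w g₁ (rot ε z) 1 * (ε * z) ^ w =
        periodForm w g₁ (z - ε) (ε * z) := by
      rw [mul_comm, ← periodForm_smul, mul_one]
      congr 1
      linear_combination ε * rot_mul_self ε (ne_zero_of_mem_upperHalfPlaneSet hz) + z * hε'
    simp only [← mul_add]
    rw [slashRot_two_mul hε w _ _ hz, ← hf₁₂ hz, add_mul,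
      eichler_rot_mul_pow hε hg₁ hg₂ hg₁₂ hz, hperiod]
  have htriangle := axisIntegral_add_slashRot_add_slashRot_slashRot hε (hf₀.mul_eichler hg₀ w)
    (hE₁.add hP₁) ((hE₂.add hP₂).add hR) h₀₁ h₁₂
  rwa [axisIntegral_add hE₁.axisIntegrable hP₁.axisIntegrable,
    axisIntegral_add (hE₂.add hP₂).axisIntegrable hR.axisIntegrable,
    axisIntegral_add hE₂.axisIntegrable hP₂.axisIntegrable] at htriangle

theorem periodForm_two (hh : IsCuspidal h) (x y : ℂ) :
    periodForm 2 h x y = axisIntegral (fun u => h u * u ^ 0) * x ^ 2 -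
      2 * axisIntegral (fun u => h u * u ^ 1) * x * y +
      axisIntegral (fun u => h u * u ^ 2) * y ^ 2 := by
  rw [periodForm_eq_sum hh]
  simp [Finset.sum_range_succ]
  ring

theorem rotDoublePeriod_two {ε : ℝ} (hε : ε ^ 2 = 1) (hf : IsCuspidal f) (hg : IsCuspidal g) :
    rotDoublePeriod 2 ε f g =
      axisIntegral (fun z => f z * z ^ 2) *
        (axisIntegral (fun z => g z * z ^ 2) - 2 * ε * axisIntegral (fun z => g z * z ^ 1) +
          axisIntegral fun z => g z * z ^ 0) +
      axisIntegral (fun z => f z * z ^ 1) *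
        (2 * axisIntegral (fun z => g z * z ^ 1) - 2 * ε * axisIntegral fun z => g z * z ^ 0) +
      axisIntegral (fun z => f z * z ^ 0) * axisIntegral fun z => g z * z ^ 0 := by
  have hε' : (ε : ℂ) ^ 2 = 1 := mod_cast hε
  simp only [← axisIntegral_mul_const]
  rw [← axisIntegral_add ((hf.mul_pow 2).mul_const _).axisIntegrable
      ((hf.mul_pow 1).mul_const _).axisIntegrable,
    ← axisIntegral_add
      (((hf.mul_pow 2).mul_const _).add ((hf.mul_pow 1).mul_const _)).axisIntegrable
      ((hf.mul_pow 0).mul_const _).axisIntegrable]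
  refine axisIntegral_congr fun z _ => ?_
  rw [periodForm_two hg]
  linear_combination f z * (axisIntegral fun z => g z * z ^ 0) * hε' +
    2 * f z * z * (axisIntegral fun z => g z * z ^ 1) * hε' +
    f z * z ^ 2 * (axisIntegral fun z => g z * z ^ 2) * hε'

end EichlerIntegral

section SlashTranslate

open ModularForm ConjAct Pointwise Matrix.SpecialLinearGroup

/-- The slash translate `f ∣[k] γ` as a function on `ℂ`; its values outside the upper half-plane are
junk. -/
noncomputable def slashFun (k : ℤ) (f : ℍ → ℂ) (γ : SL(2, ℤ)) : ℂ → ℂ := (f ∣[k] γ) ∘ ofComplex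

/-- The matrix `(1 -e; e 0)` acting on the upper half-plane as `rot e`. -/
def rotMatrix (e : ℤˣ) : SL(2, ℤ) :=
  ⟨!![1, -e; e, 0], by simp [Matrix.det_fin_two, ← Units.val_mul]⟩

variable {Γ : Subgroup (GL (Fin 2) ℝ)} {k : ℤ} {n : ℕ}

theorem slashFun_coe (k : ℤ) (f : ℍ → ℂ) (γ : SL(2, ℤ)) (z : ℍ) :
    slashFun k f γ z = f (γ • z) * (γ 1 0 * z + γ 1 1 : ℂ) ^ (-k) := by
  simp [slashFun, ModularForm.SL_slash_apply, ModularGroup.denom_apply]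

theorem coe_rotMatrix_smul (e : ℤˣ) (z : ℍ) :
    ((rotMatrix e • z : ℍ) : ℂ) = rot ((e : ℤ) : ℝ) z := by
  have hz := z.ne_zero
  rw [UpperHalfPlane.coe_specialLinearGroup_apply]
  rcases Int.units_eq_one_or e with rfl | rfl <;> simp [rotMatrix, rot] <;> field_simp <;> ring

theorem slashFun_mul_rotMatrix (hk : k = n) (f : ℍ → ℂ) (γ : SL(2, ℤ)) (e : ℤˣ) :
    EqOn (slashFun k f (γ * rotMatrix e)) (slashRot ((e : ℤ) : ℝ) n (slashFun k f γ))
      upperHalfPlaneSet := by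
  intro z hz
  lift z to ℍ using hz
  rw [slashRot, ← coe_rotMatrix_smul, slashFun, Function.comp_apply, ofComplex_apply,
    SlashAction.slash_mul, ModularForm.SL_slash_apply, ModularGroup.denom_apply, slashFun,
    Function.comp_apply, ofComplex_apply, hk]
  simp [rotMatrix, div_eq_mul_inv]

theorem tendsto_exp_neg_mul_im_mul_pow_cuspStrip {c : ℝ} (hc : 0 < c) (n : ℕ) :
    Tendsto (fun z : ℂ => Real.exp (-c * z.im) * z.im ^ n) cuspStrip (𝓝 0) :=
  ((tendsto_rpow_mul_exp_neg_mul_atTop_nhds_zero n c hc).comp tendsto_im_cuspStrip).congr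
    fun z => by simp [mul_comm]

theorem isBigO_pow_im_pow_cuspStrip (n : ℕ) :
    (fun z : ℂ => z ^ n) =O[cuspStrip] fun z => z.im ^ n := by
  refine Asymptotics.IsBigO.pow (Asymptotics.IsBigO.of_bound 2 ?_) n
  filter_upwards [eventually_abs_re_le_one_cuspStrip,
    tendsto_im_cuspStrip.eventually (eventually_ge_atTop 1)] with z hre him
  have hnorm := Complex.norm_le_abs_re_add_abs_im z
  have habs := le_abs_self z.im
  rw [Real.norm_eq_abs]
  linarith

theorem tendsto_slashFun_mul_pow [Γ.IsArithmetic] (f : CuspForm Γ k) (γ : SL(2, ℤ)) (n : ℕ) :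
    Tendsto (fun z => slashFun k f γ z * z ^ n) cuspStrip (𝓝 0) := by
  have : ((toConjAct (γ : GL (Fin 2) ℝ)⁻¹) • Γ).IsArithmetic := by
    simpa [(show Rat.castHom ℝ = algebraMap ℚ ℝ by rfl), map_inv, map_mapGL]
      using! Subgroup.IsArithmetic.conj Γ (mapGL ℚ γ)⁻¹
  obtain ⟨c, hc, hdecay⟩ := CuspFormClass.exp_decay_atImInfty' (CuspForm.translate f γ)
  have hlim : Tendsto ofComplex cuspStrip atImInfty :=
    tendsto_comap_im_ofComplex.mono_left inf_le_left
  refine ((hdecay.comp_tendsto hlim).mul (isBigO_pow_im_pow_cuspStrip n)).trans_tendsto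
    ((tendsto_exp_neg_mul_im_mul_pow_cuspStrip hc n).congr' ?_)
  filter_upwards [eventually_mem_upperHalfPlaneSet_cuspStrip] with z hz
  rw [Function.comp_apply, ← UpperHalfPlane.coe_im, ofComplex_apply_of_im_pos hz]

theorem tendsto_slashRot_axis_zero {ε : ℝ} (hε : ε ^ 2 = 1) {h : ℂ → ℂ}
    (hh : ∀ m : ℕ, Tendsto (fun z => h z * z ^ m) cuspStrip (𝓝 0)) (n : ℕ) :
    Tendsto (fun t : ℝ => slashRot ε n h (Complex.I * t)) (𝓝[>] 0) (𝓝 0) := by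
  have hpoly : Tendsto (fun u => h u * (1 - ε * u) ^ n) cuspStrip (𝓝 0) := by
    simp only [sub_mul_pow_eq_sum, Finset.mul_sum, ← mul_assoc (h _)]
    simpa using tendsto_finsetSum (Finset.range (n + 1)) fun m _ => (hh m).mul_const _
  refine (hpoly.comp (tendsto_rot_I_mul_cuspStrip
    (sq_le_one_iff_abs_le_one ε |>.1 hε.le))).congr' ?_
  filter_upwards [self_mem_nhdsWithin] with t ht
  have hε' : (ε : ℂ) ^ 2 = 1 := mod_cast hε
  have hz := ne_zero_of_mem_upperHalfPlaneSet (I_mul_ofReal_mem_upperHalfPlaneSet ht)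
  have hinv : 1 - ε * rot ε (Complex.I * t) = (ε * (Complex.I * t))⁻¹ := by
    refine eq_inv_of_mul_eq_one_left ?_
    linear_combination (-ε ^ 2 : ℂ) * rot_mul_self ε hz + (1 - ε * (Complex.I * t)) * hε'
  rw [Function.comp_apply, hinv, inv_pow, ← div_eq_mul_inv, slashRot]

theorem isCuspidal_slashFun [Γ.IsArithmetic] (hk : k = n) (f : CuspForm Γ k) (γ : SL(2, ℤ)) :
    IsCuspidal (slashFun k f γ) where
  differentiableOn := UpperHalfPlane.mdifferentiable_iff.1 ((CuspFormClass.holo f).slash k γ)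
  tendsto_mul_pow := tendsto_slashFun_mul_pow f γ
  tendsto_axis_zero := by
    refine (tendsto_slashRot_axis_zero (one_pow 2)
      (tendsto_slashFun_mul_pow f (γ * (rotMatrix 1)⁻¹)) n).congr' ?_
    filter_upwards [self_mem_nhdsWithin] with t ht
    have hrot := slashFun_mul_rotMatrix hk f (γ * (rotMatrix 1)⁻¹) 1
      (I_mul_ofReal_mem_upperHalfPlaneSet ht)
    simpa using hrot.symm

theorem eichlerPairing_slashFun_add {w : ℕ} [Γ.IsArithmetic] (hk : k = (w + 2 : ℕ))
    (f g : CuspForm Γ k) (γ : SL(2, ℤ)) (e : ℤˣ) :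
    eichlerPairing w (slashFun k f (γ * (rotMatrix e)⁻¹ * (rotMatrix e)⁻¹))
        (slashFun k g (γ * (rotMatrix e)⁻¹ * (rotMatrix e)⁻¹)) +
      (eichlerPairing w (slashFun k f (γ * (rotMatrix e)⁻¹)) (slashFun k g (γ * (rotMatrix e)⁻¹)) +
        doublePeriod w (slashFun k f (γ * (rotMatrix e)⁻¹)) (slashFun k g (γ * (rotMatrix e)⁻¹))) +
      (eichlerPairing w (slashFun k f γ) (slashFun k g γ) +
        doublePeriod w (slashFun k f γ) (slashFun k g γ) +
        rotDoublePeriod w ((e : ℤ) : ℝ) (slashFun k f γ)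
          (slashFun k g (γ * (rotMatrix e)⁻¹))) = 0 := by
  have hε : ((e : ℤ) : ℝ) ^ 2 = 1 := by rcases Int.units_eq_one_or e with rfl | rfl <;> simp
  have hcusp (h : CuspForm Γ k) (γ : SL(2, ℤ)) := isCuspidal_slashFun hk h γ
  have hrot (h : CuspForm Γ k) (γ : SL(2, ℤ)) :
      EqOn (slashFun k h γ) (slashRot ((e : ℤ) : ℝ) (w + 2) (slashFun k h (γ * (rotMatrix e)⁻¹)))
        upperHalfPlaneSet := by
    simpa using slashFun_mul_rotMatrix hk h (γ * (rotMatrix e)⁻¹) e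
  exact eichlerPairing_add_eichlerPairing_add_eichlerPairing hε (hcusp f _) (hcusp f _)
    (hcusp f _) (hcusp g _) (hcusp g _) (hcusp g _) (hrot f _) (hrot f _) (hrot g _) (hrot g _)

theorem pInt_eq_axisIntegral (f : ℍ → ℂ) (γ : SL(2, ℤ)) (i : ℕ) :
    MW.pInt f γ i = axisIntegral fun z => slashFun 4 f γ z * z ^ i := by
  refine setIntegral_congr_fun measurableSet_Ioi fun t ht => ?_
  have haxis : (MW.axisPt t : ℂ) = Complex.I * t := by simp [MW.axisPt, show 0 < t from ht]
  simp only [← haxis, slashFun_coe]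

theorem petTerm_eq_rotDoublePeriod_sub [Γ.IsArithmetic] (l : ℕ) (f g : CuspForm Γ 4)
    (γfun : ZMod l × ZMod l → SL(2, ℤ)) (p : ZMod l × ZMod l) :
    MW.petTerm l f g γfun false p =
      rotDoublePeriod 2 1 (slashFun 4 f (γfun p)) (slashFun 4 g (γfun (-p.2, p.1 + p.2))) -
      rotDoublePeriod 2 (-1) (slashFun 4 f (γfun p)) (slashFun 4 g (γfun (p.2, p.2 - p.1))) := by
  have hcusp (h : CuspForm Γ 4) (γ : SL(2, ℤ)) : IsCuspidal (slashFun 4 h γ) :=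
    isCuspidal_slashFun (n := 4) rfl h γ
  rw [rotDoublePeriod_two (one_pow 2) (hcusp f _) (hcusp g _),
    rotDoublePeriod_two (neg_one_sq) (hcusp f _) (hcusp g _)]
  simp only [MW.petTerm, MW.pair, ← pInt_eq_axisIntegral, Bool.false_eq_true, if_false]
  push_cast
  ring

end SlashTranslate

section CosetSum

open ModularForm

variable {l : ℕ} {k : ℤ} {w : ℕ}

/-- The bottom row of a matrix modulo `l`, which determines its right coset of `Γ₁(l)`. -/
def bottomRow (l : ℕ) (γ : SL(2, ℤ)) : ZMod l × ZMod l := ((γ 1 0 : ℤ), (γ 1 1 : ℤ))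

theorem copr_bottomRow [NeZero l] (γ : SL(2, ℤ)) :
    MW.copr l (bottomRow l γ).1 (bottomRow l γ).2 := by
  set d := Nat.gcd (Nat.gcd (bottomRow l γ).1.val (bottomRow l γ).2.val) l
  have hdvd {a : ℤ} (ha : d ∣ (a : ZMod l).val) : (d : ℤ) ∣ a := by
    rw [← Int.natCast_dvd_natCast, ZMod.val_intCast] at ha
    exact (EuclideanDomain.dvd_mod_iff (Int.natCast_dvd_natCast.2 (Nat.gcd_dvd_right _ _))).1 ha
  have hunit : IsUnit (d : ℤ) := (γ.isCoprime_row 1).isUnit_of_dvd'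
    (hdvd ((Nat.gcd_dvd_left _ _).trans (Nat.gcd_dvd_left _ _)))
    (hdvd ((Nat.gcd_dvd_left _ _).trans (Nat.gcd_dvd_right _ _)))
  exact Nat.isUnit_iff.1 (Int.ofNat_isUnit.1 hunit)

theorem bottomRow_mul_congr {γ γ' : SL(2, ℤ)} (h : bottomRow l γ = bottomRow l γ')
    (δ : SL(2, ℤ)) : bottomRow l (γ * δ) = bottomRow l (γ' * δ) := by
  obtain ⟨h₀, h₁⟩ := Prod.ext_iff.1 h
  simp only [bottomRow] at h₀ h₁
  simp [bottomRow, Matrix.mul_apply, h₀, h₁]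

theorem bottomRow_mul_rotMatrix_inv (γ : SL(2, ℤ)) (e : ℤˣ) :
    bottomRow l (γ * (rotMatrix e)⁻¹) =
      (-((e : ℤ) * (bottomRow l γ).2), (e : ℤ) * (bottomRow l γ).1 + (bottomRow l γ).2) := by
  have hinv : ((rotMatrix e)⁻¹ : SL(2, ℤ)).1 = !![0, (e : ℤ); -(e : ℤ), 1] := by
    rw [Matrix.SpecialLinearGroup.coe_inv, Matrix.adjugate_fin_two]
    simp [rotMatrix]
  simp [bottomRow, hinv, Matrix.mul_apply, mul_comm]

theorem mul_inv_mem_Gamma1 {γ γ' : SL(2, ℤ)} (h : bottomRow l γ = bottomRow l γ') :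
    γ * γ'⁻¹ ∈ CongruenceSubgroup.Gamma1 l := by
  obtain ⟨h₀, h₁⟩ := Prod.ext_iff.1 h
  simp only [bottomRow] at h₀ h₁
  have hdet (σ : SL(2, ℤ)) : (σ 0 0 * σ 1 1 - σ 0 1 * σ 1 0 : ZMod l) = 1 := by
    exact_mod_cast congrArg (Int.cast : ℤ → ZMod l) (Matrix.det_fin_two σ.1 ▸ σ.det_coe)
  simp only [CongruenceSubgroup.Gamma1_mem, Matrix.SpecialLinearGroup.coe_mul,
    Matrix.SpecialLinearGroup.coe_inv, Matrix.adjugate_fin_two, Matrix.mul_apply,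
    Fin.sum_univ_two, Matrix.of_apply, Matrix.cons_val', Matrix.cons_val_zero,
    Matrix.cons_val_one, Matrix.cons_val_fin_one]
  push_cast
  refine ⟨?_, ?_, ?_⟩
  · linear_combination hdet γ - γ 0 0 * h₁ + γ 0 1 * h₀
  · linear_combination hdet γ' - γ' 0 1 * h₀ + γ' 0 0 * h₁
  · linear_combination γ' 1 1 * h₀ - γ' 1 0 * h₁

theorem slashFun_congr (f : CuspForm (CongruenceSubgroup.Gamma1 l) k) {γ γ' : SL(2, ℤ)}
    (h : bottomRow l γ = bottomRow l γ') : slashFun k f γ = slashFun k f γ' := by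
  have hinv : ⇑f ∣[k] (γ * γ'⁻¹) = ⇑f :=
    SlashInvariantFormClass.slash_action_eq f _ (Subgroup.mem_map_of_mem _ (mul_inv_mem_Gamma1 h))
  rw [slashFun, ← inv_mul_cancel_right γ γ', SlashAction.slash_mul, hinv, slashFun]

theorem sum_mul_right [NeZero l] {γfun : ZMod l × ZMod l → SL(2, ℤ)}
    (hγ : ∀ p : ZMod l × ZMod l, MW.copr l p.1 p.2 → bottomRow l (γfun p) = p)
    {M : Type*} [AddCommMonoid M] {X : SL(2, ℤ) → M}
    (hX : ∀ γ γ', bottomRow l γ = bottomRow l γ' → X γ = X γ') (δ : SL(2, ℤ)) :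
    ∑ p with MW.copr l p.1 p.2, X (γfun p * δ) = ∑ p with MW.copr l p.1 p.2, X (γfun p) := by
  have hlift (γ : SL(2, ℤ)) : bottomRow l (γfun (bottomRow l γ)) = bottomRow l γ :=
    hγ _ (copr_bottomRow γ)
  refine Finset.sum_nbij' (fun p => bottomRow l (γfun p * δ))
    (fun p => bottomRow l (γfun p * δ⁻¹)) ?_ ?_ ?_ ?_ ?_
  · exact fun p _ => by simpa using copr_bottomRow (γfun p * δ)
  · exact fun p _ => by simpa using copr_bottomRow (γfun p * δ⁻¹)
  · intro p hp
    rw [bottomRow_mul_congr (hlift _), mul_inv_cancel_right, hγ p (Finset.mem_filter.1 hp).2]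
  · intro p hp
    rw [bottomRow_mul_congr (hlift _), inv_mul_cancel_right, hγ p (Finset.mem_filter.1 hp).2]
  · exact fun p _ => hX _ _ (hlift _).symm

theorem sum_rotDoublePeriod [NeZero l] (hk : k = (w + 2 : ℕ))
    (f g : CuspForm (CongruenceSubgroup.Gamma1 l) k) {γfun : ZMod l × ZMod l → SL(2, ℤ)}
    (hγ : ∀ p : ZMod l × ZMod l, MW.copr l p.1 p.2 → bottomRow l (γfun p) = p) (e : ℤˣ) :
    ∑ p with MW.copr l p.1 p.2, rotDoublePeriod w ((e : ℤ) : ℝ) (slashFun k f (γfun p))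
        (slashFun k g (γfun p * (rotMatrix e)⁻¹)) =
      -(3 * ∑ p with MW.copr l p.1 p.2,
          eichlerPairing w (slashFun k f (γfun p)) (slashFun k g (γfun p)) +
        2 * ∑ p with MW.copr l p.1 p.2,
          doublePeriod w (slashFun k f (γfun p)) (slashFun k g (γfun p))) := by
  have hshift (B : (ℂ → ℂ) → (ℂ → ℂ) → ℂ) (δ : SL(2, ℤ)) :
      ∑ p with MW.copr l p.1 p.2, B (slashFun k f (γfun p * δ)) (slashFun k g (γfun p * δ)) =
        ∑ p with MW.copr l p.1 p.2, B (slashFun k f (γfun p)) (slashFun k g (γfun p)) :=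
    sum_mul_right hγ (X := fun γ => B (slashFun k f γ) (slashFun k g γ))
      (fun γ γ' h => by simp only [slashFun_congr f h, slashFun_congr g h]) δ
  have hsum := Finset.sum_congr (s₁ := {p : ZMod l × ZMod l | MW.copr l p.1 p.2}) rfl
    fun p _ => eichlerPairing_slashFun_add hk f g (γfun p) e
  simp only [mul_assoc (γfun _), Finset.sum_add_distrib, hshift, Finset.sum_const_zero] at hsum
  linear_combination hsum

end CosetSum

end PeriodPairing

open PeriodPairing in
theorem stmt7_general (l : ℕ) [NeZero l] {k : ℤ} {w : ℕ} (hk : k = (w + 2 : ℕ))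
    (f g : CuspForm (CongruenceSubgroup.Gamma1 l) k) (γfun : ZMod l × ZMod l → SL(2, ℤ))
    (hγ : ∀ p : ZMod l × ZMod l, MW.copr l p.1 p.2 → bottomRow l (γfun p) = p) :
    0 = ∑ p with MW.copr l p.1 p.2,
      (rotDoublePeriod w 1 (slashFun k f (γfun p)) (slashFun k g (γfun (-p.2, p.1 + p.2))) -
        rotDoublePeriod w (-1) (slashFun k f (γfun p)) (slashFun k g (γfun (p.2, p.2 - p.1)))) := by
  have hsub := sub_eq_zero.2
    ((sum_rotDoublePeriod hk f g hγ 1).trans (sum_rotDoublePeriod hk f g hγ (-1)).symm)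
  rw [← hsub, ← Finset.sum_sub_distrib]
  refine Finset.sum_congr rfl fun p hp => ?_
  have hslash (e : ℤˣ) : slashFun k g (γfun p * (rotMatrix e)⁻¹) =
      slashFun k g (γfun (-((e : ℤ) * p.2), (e : ℤ) * p.1 + p.2)) := by
    have hrow := bottomRow_mul_rotMatrix_inv (l := l) (γfun p) e
    rw [hγ p (Finset.mem_filter.1 hp).2] at hrow
    rw [← hrow]
    exact slashFun_congr g (hγ _ (copr_bottomRow _)).symm
  rw [hslash, hslash]
  simp [neg_add_eq_sub]

open MW in
theorem stmt7 (l : ℕ) (hl : 3 ≤ l) [NeZero l]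
    (f g : CuspForm (CongruenceSubgroup.Gamma1 l) 4)
    (γfun : ZMod l × ZMod l → SL(2, ℤ))
    (hγ : ∀ p : ZMod l × ZMod l, copr l p.1 p.2 →
      (((γfun p : Matrix (Fin 2) (Fin 2) ℤ) 1 0 : ZMod l) = p.1 ∧
        ((γfun p : Matrix (Fin 2) (Fin 2) ℤ) 1 1 : ZMod l) = p.2)) :
    0 = ∑ p ∈ Finset.univ.filter (fun p : ZMod l × ZMod l => copr l p.1 p.2),
          petTerm l (⇑f) (⇑g) γfun false p := by
  simp only [PeriodPairing.petTerm_eq_rotDoublePeriod_sub]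
  exact stmt7_general l rfl f g γfun fun p hp => Prod.ext (hγ p hp).1 (hγ p hp).2
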